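/- For the elephant random walk with memory parameter p on a Cayley graph that is the d-regular tree T_d (d ≥ 3), if p ∈ [1/2, 1) or (p, d) = (0, 3), then there exists a constant C > 0 such that the return probability satisfies P(Δ_n = 0) ≤ C / n for all n ≥ 1. -/

import Mathlib

open MeasureTheory ProbabilityTheory Filter

noncomputable section

/-- The Cayley graph of a group with respect to a finite set of generators. -/
def cayleyGraph {G : Type*} [Group G] (S : Finset G) : SimpleGraph G where
  Adj x y := x ≠ y ∧ (y * x⁻¹ ∈ S ∨ x * y⁻¹ ∈ S)
  symm := by
    refine ⟨?_⟩
    rintro x y ⟨h1, h2⟩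
    refine ⟨h1.symm, ?_⟩
    rcases h2 with h | h
    · exact Or.inr h
    · exact Or.inl h
  loopless := ⟨fun x h => h.1 rfl⟩

/-- The elephant random walk (ERW) with memory parameter `p` on the Cayley graph of a
group `G` with respect to a symmetric generating set `S` of cardinality `d`, not
containing the identity, whose Cayley graph is a tree (hence the `d`-regular tree
`T_d`).  The steps are `g 1, g 2, …` (the value of `g 0` is irrelevant).  The law of
the process is characterised by: `g 1` is uniform on `S`, and, conditionally on the
first `n` steps being `s 1, …, s n`, the next step `g (n+1)` equals `a ∈ S` with
probability `p * N/n + ((1-p)/(d-1)) * (n-N)/n`, where `N = #{1 ≤ k ≤ n : s k = a}`;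
this is precisely the probability that the walker, recalling a uniform past epoch
`D ∈ {1, …, n}`, repeats `g D` with probability `p` and takes any given other step
with probability `(1-p)/(d-1)`. -/
structure ERW (G : Type*) [Group G] [DecidableEq G] (d : ℕ) (p : ℝ)
    (Ω : Type*) [MeasurableSpace Ω] (P : Measure Ω) where
  S : Finset G
  card_S : S.card = d
  symm_S : ∀ s ∈ S, s⁻¹ ∈ S
  one_not_mem : (1 : G) ∉ S
  tree : (cayleyGraph S).IsTree
  g : ℕ → Ω → G
  meas_g : ∀ n a, MeasurableSet {ω | g n ω = a}
  mem_S : ∀ n, 1 ≤ n → ∀ ω, g n ω ∈ S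
  init : ∀ a ∈ S, (P {ω | g 1 ω = a}).toReal = 1 / d
  update : ∀ n, 1 ≤ n → ∀ s : ℕ → G, ∀ a ∈ S,
    (P ({ω | ∀ k ∈ Finset.Icc 1 n, g k ω = s k} ∩ {ω | g (n + 1) ω = a})).toReal
      = (p * ((((Finset.Icc 1 n).filter fun k => s k = a).card : ℝ) / n)
          + (1 - p) / ((d : ℝ) - 1)
            * (((n : ℝ) - (((Finset.Icc 1 n).filter fun k => s k = a).card : ℝ)) / n))
        * (P {ω | ∀ k ∈ Finset.Icc 1 n, g k ω = s k}).toReal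

namespace ERW

variable {G : Type*} [Group G] [DecidableEq G] {d : ℕ} {p : ℝ}
  {Ω : Type*} [MeasurableSpace Ω] {P : Measure Ω}

/-- The position `w n = g n ⋯ g 1` of the walk at time `n`. -/
def pos (E : ERW G d p Ω P) : ℕ → Ω → G
  | 0 => fun _ => 1
  | n + 1 => fun ω => E.g (n + 1) ω * E.pos n ω

/-- `Δ n`: the (word-metric) distance of the walker from the root at time `n`. -/
def dist (E : ERW G d p Ω P) (n : ℕ) (ω : Ω) : ℕ :=
  (cayleyGraph E.S).dist 1 (E.pos n ω)

/-- `N n a`: the number of `a`-steps taken by time `n`. -/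
def count (E : ERW G d p Ω P) (a : G) (n : ℕ) (ω : Ω) : ℕ :=
  ((Finset.Icc 1 n).filter fun k => E.g k ω = a).card

/-- `γ n`: the unique step decreasing the distance to the root by 1
(a junk value if the walker is at the root). -/
def gammaStep (E : ERW G d p Ω P) (n : ℕ) (ω : Ω) : G :=
  @Classical.epsilon G ⟨1⟩ fun s =>
    s ∈ E.S ∧ (cayleyGraph E.S).dist 1 (s * E.pos n ω) + 1 = E.dist n ω

/-- `ℓ n = N n (γ n)` if the walker is away from the root, and `0` otherwise. -/
def ell (E : ERW G d p Ω P) (n : ℕ) (ω : Ω) : ℕ :=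
  if E.pos n ω = 1 then 0 else E.count (E.gammaStep n ω) n ω

/-- `Ξ n = (1/n) ∑_{k=0}^{n-1} (ℓ k / k - 1(Δ k > 0)/d)` (with the convention
`ℓ 0 / 0 = 0`, automatic since division by zero yields zero). -/
def Xi (E : ERW G d p Ω P) (n : ℕ) (ω : Ω) : ℝ :=
  (1 / n) * ∑ k ∈ Finset.range n,
    ((E.ell k ω : ℝ) / k - (if 0 < E.dist k ω then 1 else 0) / d)

/-- The natural filtration `F n` generated by the steps up to time `n`. -/
def filt (E : ERW G d p Ω P) (n : ℕ) : MeasurableSpace Ω :=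
  ⨆ k ∈ Finset.Icc 1 n, MeasurableSpace.comap (E.g k) ⊤

/-- `G n = E[Δ (n+1) - Δ n | F n]`. -/
def drift (E : ERW G d p Ω P) (n : ℕ) : Ω → ℝ :=
  P[fun ω => ((E.dist (n + 1) ω : ℝ) - (E.dist n ω : ℝ)) | E.filt n]

/-- The martingale differences `Y k = Δ k - Δ (k-1) - G (k-1)`. -/
def mdiff (E : ERW G d p Ω P) (k : ℕ) (ω : Ω) : ℝ :=
  (E.dist k ω : ℝ) - (E.dist (k - 1) ω : ℝ) - E.drift (k - 1) ω

/-- The martingale `M n = ∑_{k=1}^n Y k`. -/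
def mart (E : ERW G d p Ω P) (n : ℕ) (ω : Ω) : ℝ :=
  ∑ k ∈ Finset.Icc 1 n, E.mdiff k ω

end ERW

/-- The rate `r n`: `√n` in the subcritical regime `p < p_d = (d+1)/(2d)`,
`√(n / log n)` in the critical regime `p = p_d`, and `n ^ (d(1-p)/(d-1))` in the
supercritical regime `p > p_d`. -/
def rate (p : ℝ) (d : ℕ) (n : ℕ) : ℝ :=
  if p < ((d : ℝ) + 1) / (2 * d) then Real.sqrt n
  else if p = ((d : ℝ) + 1) / (2 * d) then Real.sqrt ((n : ℝ) / Real.log n)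
  else (n : ℝ) ^ ((d : ℝ) * (1 - p) / ((d : ℝ) - 1))

/-!
Each step frequency of the walk satisfies a linear recursion whose coefficient `memoryBias d p` has
absolute value `< 1`, so its deviation from `1 / d` is sub-Gaussian with a variance proxy of order
`n ^ (-δ)`; hence it exceeds `1 / 10` with probability at most `2 * exp (-c * n ^ δ)`. While all
deviations are below `1 / 10`, every step has probability at most `1 / 3 + 1 / 10 < 1 / 2`. In a
tree at most one step leads towards the root, so `(4 / 5) ^ Δ n` then contracts in mean by a fixed
factor. The mean of `(4 / 5) ^ Δ n`, which dominates the return probability, therefore decays as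
fast as `exp (-c * n ^ δ)`.
-/

section Estimates

theorem bernoulli_mgf_le {q : ℝ} (hq0 : 0 ≤ q) (hq1 : q ≤ 1) (t : ℝ) :
    q * Real.exp t + (1 - q) ≤ Real.exp (t * q + t ^ 2 / 2) := by
  have up : Real.exp ((1 - q) * t) ≤ Real.cosh t + (1 - q) * Real.sinh t :=
    Real.exp_mul_le_cosh_add_mul_sinh (abs_le.2 ⟨by linarith, by linarith⟩) t
  have down : Real.exp (-q * t) ≤ Real.cosh t + -q * Real.sinh t :=
    Real.exp_mul_le_cosh_add_mul_sinh (abs_le.2 ⟨by linarith, by linarith⟩) t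
  have centred : q * Real.exp ((1 - q) * t) + (1 - q) * Real.exp (-q * t) ≤ Real.cosh t := by
    linear_combination q * up + (1 - q) * down
  calc q * Real.exp t + (1 - q)
      = Real.exp (t * q) * (q * Real.exp ((1 - q) * t) + (1 - q) * Real.exp (-q * t)) := by
        rw [mul_add, mul_left_comm, mul_left_comm _ (1 - q), ← Real.exp_add, ← Real.exp_add,
          show t * q + (1 - q) * t = t by ring, show t * q + -q * t = 0 by ring, Real.exp_zero,
          mul_one]
    _ ≤ Real.exp (t * q) * Real.exp (t ^ 2 / 2) := by
        gcongr
        exact centred.trans (Real.cosh_le_exp_half_sq t)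
    _ = Real.exp (t * q + t ^ 2 / 2) := (Real.exp_add _ _).symm

theorem rpow_neg_mul_div_add_le {x δ : ℝ} (hx : 0 < x) (hδ0 : 0 ≤ δ) (hδ1 : δ ≤ 1) :
    x ^ (-δ) * (x / (x + δ)) ≤ (x + 1) ^ (-δ) := by
  have bernoulli : (1 + 1 / x) ^ δ ≤ 1 + δ * (1 / x) :=
    rpow_one_add_le_one_add_mul_self (by linarith [one_div_pos.2 hx]) hδ0 hδ1
  calc x ^ (-δ) * (x / (x + δ)) = x ^ (-δ) * (1 + δ * (1 / x))⁻¹ := by field_simp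
    _ ≤ x ^ (-δ) * ((1 + 1 / x) ^ δ)⁻¹ := by gcongr
    _ = (x * (1 + 1 / x)) ^ (-δ) := by
        rw [Real.mul_rpow hx.le (by positivity), Real.rpow_neg (by positivity : 0 ≤ 1 + 1 / x)]
    _ = (x + 1) ^ (-δ) := by field_simp

theorem sq_div_add_one_le {x α δ : ℝ} (hx : 1 ≤ x) (hα : |α| ≤ 1 - 2 * δ) (hδ : 0 ≤ δ) :
    ((x + α) / (x + 1)) ^ 2 ≤ (x + 1 - 2 * δ) / (x + 1) := by
  obtain ⟨hα_lower, hα_upper⟩ := abs_le.1 hα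
  have ratio_nonneg : 0 ≤ (x + α) / (x + 1) := div_nonneg (by linarith) (by linarith)
  have ratio_le_one : (x + α) / (x + 1) ≤ 1 := (div_le_one (by linarith)).2 (by linarith)
  calc ((x + α) / (x + 1)) ^ 2 ≤ (x + α) / (x + 1) := by
        rw [sq]; exact mul_le_of_le_one_left ratio_nonneg ratio_le_one
    _ ≤ (x + 1 - 2 * δ) / (x + 1) := by gcongr; linarith

/-- The quadratic coefficient in the sub-Gaussian bound for the step frequencies after `x` steps.
The constant `4 * δ ^ 2` makes it a supersolution of the variance recursion of the walk. -/
def varianceProxy (δ x : ℝ) : ℝ := x ^ (-δ) / (4 * δ ^ 2)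

theorem le_varianceProxy_add_one {x α δ : ℝ} (hx : 1 ≤ x) (hδ : 0 < δ) (hα : |α| ≤ 1 - 2 * δ) :
    ((x + α) / (x + 1)) ^ 2 * varianceProxy δ x + 1 / (2 * (x + 1) ^ 2) ≤
      varianceProxy δ (x + 1) := by
  have hδ_half : δ ≤ 1 / 2 := by linarith [abs_nonneg α]
  have hx0 : 0 < x := by linarith
  have inv_le : x⁻¹ ≤ x ^ (-δ) := by
    rw [← Real.rpow_neg_one]
    exact Real.rpow_le_rpow_of_exponent_le hx (by linarith)
  have gap : 2 * δ ^ 2 * x / ((x + δ) * (x + 1)) ≤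
      x / (x + δ) - (x + 1 - 2 * δ) / (x + 1) := by
    rw [div_sub_div _ _ (by positivity) (by positivity)]
    gcongr
    nlinarith [mul_nonneg (sub_nonneg.2 hx) (mul_nonneg hδ.le (sub_nonneg.2 hδ_half))]
  have noise_le : 1 / (2 * (x + 1) ^ 2) ≤
      x ^ (-δ) / (4 * δ ^ 2) * (2 * δ ^ 2 * x / ((x + δ) * (x + 1))) := by
    calc 1 / (2 * (x + 1) ^ 2) ≤ 1 / (2 * ((x + δ) * (x + 1))) := by
          rw [sq]; gcongr; linarith
      _ = x⁻¹ / (4 * δ ^ 2) * (2 * δ ^ 2 * x / ((x + δ) * (x + 1))) := by field_simp; norm_num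
      _ ≤ _ := by gcongr
  calc ((x + α) / (x + 1)) ^ 2 * varianceProxy δ x + 1 / (2 * (x + 1) ^ 2)
      ≤ (x + 1 - 2 * δ) / (x + 1) * (x ^ (-δ) / (4 * δ ^ 2)) +
          x ^ (-δ) / (4 * δ ^ 2) * (x / (x + δ) - (x + 1 - 2 * δ) / (x + 1)) := by
        refine add_le_add ?_ (noise_le.trans ?_)
        · rw [varianceProxy]
          gcongr
          exact sq_div_add_one_le hx hα hδ.le
        · gcongr
    _ = x ^ (-δ) * (x / (x + δ)) / (4 * δ ^ 2) := by ring
    _ ≤ (x + 1) ^ (-δ) / (4 * δ ^ 2) := by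
        gcongr
        exact rpow_neg_mul_div_add_le hx0 hδ.le (by linarith)

theorem le_varianceProxy_natCast_succ {α δ : ℝ} (hδ : 0 < δ) (hα : |α| ≤ 1 - 2 * δ) (n : ℕ) :
    ((n + α) / (n + 1)) ^ 2 * varianceProxy δ n + 1 / (2 * ((n : ℝ) + 1) ^ 2) ≤
      varianceProxy δ (n + 1 : ℕ) := by
  rcases Nat.eq_zero_or_pos n with rfl | hn
  · have hδ_half : δ ≤ 1 / 2 := by linarith [abs_nonneg α]
    have : 1 / 2 ≤ 1 / (4 * δ ^ 2) := one_div_le_one_div_of_le (by positivity) (by nlinarith)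
    simpa [varianceProxy, Real.zero_rpow (neg_ne_zero.2 hδ.ne')] using this
  · rw [Nat.cast_add_one]
    exact le_varianceProxy_add_one (by exact_mod_cast hn) hδ hα

theorem le_mul_of_succ_le_mul_add {u φ : ℕ → ℝ} {ρ κ B C : ℝ} (hρ : 0 ≤ ρ) (hφ : ∀ n, 0 ≤ φ n)
    (hu : ∀ n, u (n + 1) ≤ ρ * u n + B * φ n) (hφ_succ : ∀ n, φ n ≤ κ * φ (n + 1))
    (hu_zero : u 0 ≤ C * φ 0) (hC_nonneg : 0 ≤ ρ * C + B) (hC : κ * (ρ * C + B) ≤ C) (n : ℕ) :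
    u n ≤ C * φ n := by
  induction n with
  | zero => exact hu_zero
  | succ n ih =>
    calc u (n + 1) ≤ ρ * (C * φ n) + B * φ n := (hu n).trans (by gcongr)
      _ = (ρ * C + B) * φ n := by ring
      _ ≤ (ρ * C + B) * (κ * φ (n + 1)) := by gcongr; exact hφ_succ n
      _ = κ * (ρ * C + B) * φ (n + 1) := by ring
      _ ≤ C * φ (n + 1) := by gcongr; exact hφ _

theorem exp_neg_mul_rpow_le_succ {c δ : ℝ} (hc : 0 ≤ c) (hδ0 : 0 ≤ δ) (hδ1 : δ ≤ 1) (n : ℕ) :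
    Real.exp (-c * (n : ℝ) ^ δ) ≤ Real.exp c * Real.exp (-c * ((n + 1 : ℕ) : ℝ) ^ δ) := by
  have subadditive : ((n : ℝ) + 1) ^ δ ≤ (n : ℝ) ^ δ + 1 := by
    simpa using Real.rpow_add_le_add_rpow n.cast_nonneg zero_le_one hδ0 hδ1
  rw [← Real.exp_add, Real.exp_le_exp, Nat.cast_add_one]
  nlinarith [mul_le_mul_of_nonneg_left subadditive hc]

theorem exists_exp_neg_mul_rpow_le_div {c δ : ℝ} (hc : 0 < c) (hδ : 0 < δ) :
    ∃ C : ℝ, 0 < C ∧ ∀ x : ℝ, 1 ≤ x → Real.exp (-c * x ^ δ) ≤ C / x := by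
  obtain ⟨k, hk⟩ := exists_nat_ge δ⁻¹
  have one_le_mul : 1 ≤ δ * k := by rwa [inv_le_iff_one_le_mul₀' hδ] at hk
  refine ⟨k.factorial / c ^ k, by positivity, fun x hx => ?_⟩
  have hx0 : 0 < x := by linarith
  have taylor : c ^ k * x / k.factorial ≤ Real.exp (c * x ^ δ) :=
    calc c ^ k * x / k.factorial ≤ c ^ k * x ^ (δ * k) / k.factorial := by
          gcongr
          exact Real.self_le_rpow_of_one_le hx one_le_mul
      _ = (c * x ^ δ) ^ k / k.factorial := by rw [mul_pow, Real.rpow_mul_natCast hx0.le]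
      _ ≤ Real.exp (c * x ^ δ) := Real.pow_div_factorial_le_exp _ (by positivity) k
  calc Real.exp (-c * x ^ δ) = (Real.exp (c * x ^ δ))⁻¹ := by rw [neg_mul, Real.exp_neg]
    _ ≤ (c ^ k * x / k.factorial)⁻¹ := inv_anti₀ (by positivity) taylor
    _ = k.factorial / c ^ k / x := by field_simp

theorem exists_le_div_of_le_exp_neg_mul_rpow {u : ℕ → ℝ} {c δ C : ℝ} (hc : 0 < c) (hδ : 0 < δ)
    (hC : 0 < C) (hu : ∀ n : ℕ, u n ≤ C * Real.exp (-c * (n : ℝ) ^ δ)) :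
    ∃ K : ℝ, 0 < K ∧ ∀ n : ℕ, 1 ≤ n → u n ≤ K / n := by
  obtain ⟨K, hK, decay⟩ := exists_exp_neg_mul_rpow_le_div hc hδ
  refine ⟨C * K, mul_pos hC hK, fun n hn => (hu n).trans ?_⟩
  rw [mul_div_assoc]
  gcongr
  exact decay n (by exact_mod_cast hn)

theorem sum_mul_pow_le_of_sum_filter_le {A : Type*} [Fintype A] {q : A → ℝ} (hq : ∀ a, 0 ≤ q a)
    (hq_sum : ∑ a, q a = 1) {r m : ℝ} (hr0 : 0 < r) (hr1 : r ≤ 1) {D : ℕ} {D' : A → ℕ}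
    (hD' : ∀ a, D ≤ D' a + 1) (hm : ∑ a with D' a ≤ D, q a ≤ m) :
    ∑ a, q a * r ^ D' a ≤ (r + (r⁻¹ - r) * m) * r ^ D := by
  have step_le (a : A) : r ^ D' a ≤ (r + if D' a ≤ D then r⁻¹ - r else 0) * r ^ D := by
    split_ifs with h
    · rw [add_sub_cancel, inv_mul_eq_div, le_div_iff₀ hr0, ← pow_succ]
      exact pow_le_pow_of_le_one hr0.le hr1 (hD' a)
    · rw [add_zero, ← pow_succ']
      exact pow_le_pow_of_le_one hr0.le hr1 (by omega)
  calc ∑ a, q a * r ^ D' a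
      ≤ ∑ a, q a * ((r + if D' a ≤ D then r⁻¹ - r else 0) * r ^ D) := by
        gcongr with a
        · exact hq a
        · exact step_le a
    _ = (r + (r⁻¹ - r) * ∑ a with D' a ≤ D, q a) * r ^ D := by
        simp_rw [← mul_assoc, ← Finset.sum_mul, mul_add, Finset.sum_add_distrib,
          ← Finset.sum_mul, hq_sum, Finset.mul_sum, Finset.sum_filter, mul_ite, mul_zero,
          one_mul, mul_comm (q _)]
    _ ≤ (r + (r⁻¹ - r) * m) * r ^ D := by
        have : 0 ≤ r⁻¹ - r := sub_nonneg.2 (hr1.trans ((one_le_inv₀ hr0).2 hr1))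
        gcongr

end Estimates

section Tree

theorem penultimate_eq_of_dist_lt {V : Type*} {T : SimpleGraph V} (hT : T.IsTree) {r x y : V}
    (hxy : T.Adj x y) (hlt : T.dist r y < T.dist r x) {q : T.Walk r x} (hq : q.IsPath) :
    q.penultimate = y := by
  classical
  obtain ⟨w, hw, hw_length⟩ := hT.connected.exists_path_of_dist r y
  have x_notMem : x ∉ w.support := fun hx => by
    have := T.dist_le (w.takeUntil x hx)
    have := w.length_takeUntil_le_length hx
    omega
  have q_eq : q = w.concat hxy.symm :=
    (hT.existsUnique_path r x).unique hq (hw.concat x_notMem hxy.symm)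
  rw [q_eq, SimpleGraph.Walk.penultimate_concat]

theorem subsingleton_adj_dist_lt {V : Type*} {T : SimpleGraph V} (hT : T.IsTree) (r x : V) :
    {y | T.Adj x y ∧ T.dist r y < T.dist r x}.Subsingleton := by
  obtain ⟨q, hq, -⟩ := hT.existsUnique_path r x
  rintro y ⟨hxy, hy⟩ z ⟨hxz, hz⟩
  rw [← penultimate_eq_of_dist_lt hT hxy hy hq, penultimate_eq_of_dist_lt hT hxz hz hq]

end Tree

/-- The memory coefficient `α`: a recalled step is repeated with probability `p`, against
`(1 - p) / (d - 1)` for each other step, so `α` is the bias in favour of the recalled one. -/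
def memoryBias (d : ℕ) (p : ℝ) : ℝ := p - (1 - p) / ((d : ℝ) - 1)

theorem abs_memoryBias_lt_one {d : ℕ} {p : ℝ} (hd : 3 ≤ d) (hp0 : 0 ≤ p) (hp1 : p < 1) :
    |memoryBias d p| < 1 := by
  have hd' : (3 : ℝ) ≤ d := by exact_mod_cast hd
  have quotient_nonneg : 0 ≤ (1 - p) / ((d : ℝ) - 1) := div_nonneg (by linarith) (by linarith)
  have quotient_lt_one : (1 - p) / ((d : ℝ) - 1) < 1 := by
    rw [div_lt_one (by linarith)]
    linarith
  rw [memoryBias, abs_lt]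
  constructor <;> linarith

namespace StepHistory

variable {A : Type*} [Fintype A] [DecidableEq A] {p : ℝ}

/-- The deviation of the empirical frequency of `a` in the history `l` from `1 / |A|`, written so
that it vanishes on the empty history. -/
def deviation (a : A) (l : List A) : ℝ :=
  ((l.count a : ℝ) - l.length / Fintype.card A) / l.length

/-- The conditional probability that the elephant's next step is `a`, given its history `l`.
Histories list the most recent step first. -/
def stepProb (p : ℝ) (a : A) (l : List A) : ℝ :=
  1 / Fintype.card A + memoryBias (Fintype.card A) p * deviation a l

/-- The one-step conditional mean `f ↦ E[f (history after the next step) | history]`. Its `n`-th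
power evaluated at `[]` is the mean of `f` over histories of length `n`. -/
def nextMean (p : ℝ) : Module.End ℝ (List A → ℝ) where
  toFun f l := ∑ a, stepProb p a l * f (a :: l)
  map_add' f g := by
    ext l
    simp only [Pi.add_apply, mul_add, Finset.sum_add_distrib]
  map_smul' c f := by
    ext l
    simp only [Pi.smul_apply, smul_eq_mul, RingHom.id_apply, Finset.mul_sum, mul_left_comm c]

theorem nextMean_apply (p : ℝ) (f : List A → ℝ) (l : List A) :
    nextMean p f l = ∑ a, stepProb p a l * f (a :: l) := rfl

theorem length_mul_deviation (a : A) (l : List A) :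
    l.length * deviation a l = l.count a - l.length / Fintype.card A := by
  rcases eq_or_ne l [] with rfl | hl
  · simp
  · have : (l.length : ℝ) ≠ 0 := by simpa using hl
    rw [deviation, mul_div_cancel₀ _ this]

theorem deviation_cons (a b : A) (l : List A) :
    deviation a (b :: l) =
      (l.length * deviation a l + (if b = a then 1 else 0) - 1 / Fintype.card A) /
        (l.length + 1) := by
  rw [length_mul_deviation, deviation, List.count_cons, List.length_cons]
  push_cast
  simp only [beq_iff_eq, add_div]
  ring

theorem sum_deviation [Nonempty A] (l : List A) : ∑ a, deviation a l = 0 := by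
  have sum_count : ∑ a, (l.count a : ℝ) = l.length := by
    have := Multiset.sum_count_eq_card (m := (l : Multiset A)) fun a _ => Finset.mem_univ a
    simp only [Multiset.coe_count, Multiset.coe_card] at this
    exact_mod_cast this
  simp only [deviation, ← Finset.sum_div, Finset.sum_sub_distrib, sum_count, Finset.sum_const,
    Finset.card_univ, nsmul_eq_mul]
  field_simp
  simp

theorem sum_stepProb [Nonempty A] (p : ℝ) (l : List A) : ∑ a, stepProb p a l = 1 := by
  simp [stepProb, Finset.sum_add_distrib, ← Finset.mul_sum, sum_deviation]

theorem sum_stepProb_mul_one_add_ite [Nonempty A] (p : ℝ) (a : A) (l : List A) (c : ℝ) :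
    ∑ b, stepProb p b l * (1 + if b = a then c else 0) = 1 + stepProb p a l * c := by
  simp [mul_add, Finset.sum_add_distrib, sum_stepProb]

theorem stepProb_eq_of_ne_nil [Nontrivial A] (p : ℝ) (a : A) {l : List A} (hl : l ≠ []) :
    stepProb p a l = p * (l.count a / l.length) +
      (1 - p) / ((Fintype.card A : ℝ) - 1) * ((l.length - l.count a) / l.length) := by
  have card_gt_one : (1 : ℝ) < Fintype.card A := by exact_mod_cast Fintype.one_lt_card
  have : (Fintype.card A : ℝ) - 1 ≠ 0 := by linarith
  have : (l.length : ℝ) ≠ 0 := by simpa using hl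
  rw [stepProb, memoryBias, deviation]
  field_simp
  ring

theorem stepProb_nonneg [Nontrivial A] (hp0 : 0 ≤ p) (hp1 : p ≤ 1) (a : A) (l : List A) :
    0 ≤ stepProb p a l := by
  rcases eq_or_ne l [] with rfl | hl
  · simp [stepProb, deviation]
  · have card_gt_one : (1 : ℝ) < Fintype.card A := by exact_mod_cast Fintype.one_lt_card
    have count_le : (l.count a : ℝ) ≤ l.length := by exact_mod_cast List.count_le_length
    have := div_nonneg (sub_nonneg.2 hp1) (sub_pos.2 card_gt_one).le
    have := div_nonneg (sub_nonneg.2 count_le) l.length.cast_nonneg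
    rw [stepProb_eq_of_ne_nil p a hl]
    positivity

theorem stepProb_le_one [Nontrivial A] (hp0 : 0 ≤ p) (hp1 : p ≤ 1) (a : A) (l : List A) :
    stepProb p a l ≤ 1 := by
  rw [← sum_stepProb p l]
  exact Finset.single_le_sum (fun b _ => stepProb_nonneg hp0 hp1 b l) (Finset.mem_univ a)

theorem stepProb_le_of_abs_deviation_le (hA : 3 ≤ Fintype.card A) (hp0 : 0 ≤ p) (hp1 : p < 1)
    {ε : ℝ} {a : A} {l : List A} (h : |deviation a l| ≤ ε) : stepProb p a l ≤ 1 / 3 + ε := by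
  have hA' : (3 : ℝ) ≤ Fintype.card A := by exact_mod_cast hA
  have bias_le : memoryBias (Fintype.card A) p * deviation a l ≤ ε :=
    calc memoryBias (Fintype.card A) p * deviation a l
        ≤ |memoryBias (Fintype.card A) p| * |deviation a l| := by
          rw [← abs_mul]
          exact le_abs_self _
      _ ≤ 1 * ε := by
          gcongr
          exact (abs_memoryBias_lt_one hA hp0 hp1).le
      _ = ε := one_mul ε
  rw [stepProb]
  gcongr

theorem sum_stepProb_le_of_subsingleton [Nontrivial A] (hp0 : 0 ≤ p) (hp1 : p ≤ 1) {m : ℝ}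
    {s : Finset A} (hs : (s : Set A).Subsingleton) {l : List A} (h : ∀ a, stepProb p a l ≤ m) :
    ∑ a ∈ s, stepProb p a l ≤ m := by
  rcases s.eq_empty_or_nonempty with rfl | ⟨a, ha⟩
  · have ⟨a⟩ : Nonempty A := inferInstance
    exact (stepProb_nonneg hp0 hp1 a l).trans (h a)
  · rw [Finset.eq_singleton_iff_unique_mem.2 ⟨ha, fun b hb => hs hb ha⟩, Finset.sum_singleton]
    exact h a

theorem nextMean_mono_apply [Nontrivial A] (hp0 : 0 ≤ p) (hp1 : p ≤ 1) {f g : List A → ℝ}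
    {l : List A} (h : ∀ a, f (a :: l) ≤ g (a :: l)) : nextMean p f l ≤ nextMean p g l :=
  Finset.sum_le_sum fun a _ => mul_le_mul_of_nonneg_left (h a) (stepProb_nonneg hp0 hp1 a l)

theorem nextMean_le_one [Nontrivial A] (hp0 : 0 ≤ p) (hp1 : p ≤ 1) {f : List A → ℝ}
    {l : List A} (h : ∀ a, f (a :: l) ≤ 1) : nextMean p f l ≤ 1 :=
  calc nextMean p f l ≤ nextMean p 1 l := nextMean_mono_apply hp0 hp1 h
    _ = 1 := by simp [nextMean_apply, sum_stepProb]

theorem nextMean_pow_mono_apply [Nontrivial A] (hp0 : 0 ≤ p) (hp1 : p ≤ 1) {f g : List A → ℝ}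
    (n : ℕ) (l : List A) (h : ∀ l', l'.length = l.length + n → f l' ≤ g l') :
    (nextMean p ^ n) f l ≤ (nextMean p ^ n) g l := by
  induction n generalizing l with
  | zero => exact h l rfl
  | succ n ih =>
    rw [pow_succ', Module.End.mul_apply, Module.End.mul_apply]
    refine nextMean_mono_apply hp0 hp1 fun a => ih (a :: l) fun l' hl' => h l' ?_
    rw [hl', List.length_cons]
    ring

theorem nextMean_exp_deviation_le [Nontrivial A] (hp0 : 0 ≤ p) (hp1 : p ≤ 1) (a : A) (t : ℝ)
    (l : List A) :
    nextMean p (fun l => Real.exp (t * deviation a l)) l ≤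
      Real.exp (t ^ 2 / (2 * (l.length + 1) ^ 2)) *
        Real.exp (t * ((l.length + memoryBias (Fintype.card A) p) / (l.length + 1)) *
          deviation a l) := by
  set n : ℝ := (l.length : ℝ)
  set q := stepProb p a l with hq
  set s := t / (n + 1) with hs
  set y := s * (n * deviation a l - 1 / Fintype.card A) with hy
  have exp_cons (b : A) :
      Real.exp (t * deviation a (b :: l)) =
        Real.exp y * (1 + if b = a then Real.exp s - 1 else 0) := by
    have : t * deviation a (b :: l) = y + if b = a then s else 0 := by
      rw [deviation_cons, hy, hs]
      split_ifs <;> ring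
    rw [this, Real.exp_add]
    split_ifs <;> simp
  calc ∑ b, stepProb p b l * Real.exp (t * deviation a (b :: l))
      = Real.exp y * (q * Real.exp s + (1 - q)) := by
        simp_rw [exp_cons, mul_left_comm _ (Real.exp y)]
        rw [← Finset.mul_sum, sum_stepProb_mul_one_add_ite]
        ring
    _ ≤ Real.exp y * Real.exp (s * q + s ^ 2 / 2) := by
        gcongr
        exact bernoulli_mgf_le (stepProb_nonneg hp0 hp1 a l) (stepProb_le_one hp0 hp1 a l) s
    _ = _ := by
        have : n + 1 ≠ 0 := by positivity
        rw [← Real.exp_add, ← Real.exp_add, hy, hs, hq, stepProb]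
        congr 1
        field_simp
        ring

theorem mean_exp_deviation_le [Nontrivial A] (hp0 : 0 ≤ p) (hp1 : p ≤ 1)
    {δ : ℝ} (hδ : 0 < δ) (hα : |memoryBias (Fintype.card A) p| ≤ 1 - 2 * δ)
    (a : A) (n : ℕ) (t : ℝ) :
    (nextMean p ^ n) (fun l => Real.exp (t * deviation a l)) [] ≤
      Real.exp (varianceProxy δ n * t ^ 2) := by
  set α := memoryBias (Fintype.card A) p
  induction n generalizing t with
  | zero => simp [deviation, varianceProxy, Real.zero_rpow (neg_ne_zero.2 hδ.ne')]
  | succ n ih =>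
    rw [pow_succ, Module.End.mul_apply]
    calc (nextMean p ^ n) (nextMean p fun l => Real.exp (t * deviation a l)) []
        ≤ (nextMean p ^ n) (Real.exp (t ^ 2 / (2 * (n + 1) ^ 2)) •
            fun l => Real.exp (t * ((n + α) / (n + 1)) * deviation a l)) [] := by
          refine nextMean_pow_mono_apply hp0 hp1 n [] fun l hl => ?_
          have length_eq : l.length = n := by simpa using hl
          simpa only [length_eq, Pi.smul_apply, smul_eq_mul] using
            nextMean_exp_deviation_le hp0 hp1 a t l
      _ ≤ Real.exp (t ^ 2 / (2 * (n + 1) ^ 2)) *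
            Real.exp (varianceProxy δ n * (t * ((n + α) / (n + 1))) ^ 2) := by
          rw [map_smul, Pi.smul_apply, smul_eq_mul]
          gcongr
          exact ih _
      _ ≤ Real.exp (varianceProxy δ (n + 1 : ℕ) * t ^ 2) := by
          rw [← Real.exp_add, Real.exp_le_exp]
          linear_combination t ^ 2 * le_varianceProxy_natCast_succ hδ hα n

theorem indicator_le_abs_deviation_le {ε t : ℝ} (ht : 0 ≤ t) (a : A) (l : List A) :
    {l | ε ≤ |deviation a l|}.indicator 1 l ≤ Real.exp (-(t * ε)) *
      (Real.exp (t * deviation a l) + Real.exp (-t * deviation a l)) := by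
  refine Set.indicator_apply_le' (fun h => ?_) fun _ => by positivity
  rw [Pi.one_apply]
  calc 1 ≤ Real.exp (-(t * ε) + |t * deviation a l|) := by
        refine Real.one_le_exp ?_
        rw [abs_mul, abs_of_nonneg ht]
        linarith [mul_le_mul_of_nonneg_left h ht]
    _ ≤ _ := by
        rw [Real.exp_add, neg_mul]
        gcongr
        exact Real.exp_abs_le _

theorem mean_indicator_le_abs_deviation_le [Nontrivial A] (hp0 : 0 ≤ p) (hp1 : p ≤ 1)
    {δ : ℝ} (hδ : 0 < δ) (hα : |memoryBias (Fintype.card A) p| ≤ 1 - 2 * δ)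
    {ε : ℝ} (hε : 0 ≤ ε) (a : A) (n : ℕ) :
    (nextMean p ^ n) ({l | ε ≤ |deviation a l|}.indicator 1) [] ≤
      2 * Real.exp (-(δ * ε) ^ 2 * (n : ℝ) ^ δ) := by
  -- The minimiser of the Chernoff exponent `varianceProxy δ n * t ^ 2 - t * ε`.
  set t := 2 * δ ^ 2 * ε * (n : ℝ) ^ δ with ht
  have ht0 : 0 ≤ t := by positivity
  have mgf_pos := mean_exp_deviation_le hp0 hp1 hδ hα a n t
  have mgf_neg := mean_exp_deviation_le hp0 hp1 hδ hα a n (-t)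
  rw [neg_sq] at mgf_neg
  have exponent_eq : -(t * ε) + varianceProxy δ n * t ^ 2 =
      -(δ * ε) ^ 2 * (n : ℝ) ^ δ := by
    have : (n : ℝ) ^ (-δ) * ((n : ℝ) ^ δ * (n : ℝ) ^ δ) = (n : ℝ) ^ δ := by
      rw [Real.rpow_neg n.cast_nonneg, ← mul_assoc, inv_mul_mul_self]
    rw [ht, varianceProxy]
    field_simp
    linear_combination 4 * ε ^ 2 * this
  calc (nextMean p ^ n) ({l | ε ≤ |deviation a l|}.indicator 1) []
      ≤ (nextMean p ^ n) (Real.exp (-(t * ε)) • ((fun l => Real.exp (t * deviation a l)) +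
          fun l => Real.exp (-t * deviation a l))) [] :=
        nextMean_pow_mono_apply hp0 hp1 n [] fun l _ => indicator_le_abs_deviation_le ht0 a l
    _ ≤ Real.exp (-(t * ε)) * (2 * Real.exp (varianceProxy δ n * t ^ 2)) := by
        rw [map_smul, map_add, Pi.smul_apply, Pi.add_apply, smul_eq_mul]
        gcongr
        linarith
    _ = 2 * Real.exp (-(δ * ε) ^ 2 * (n : ℝ) ^ δ) := by
        rw [mul_left_comm, ← Real.exp_add, exponent_eq]

end StepHistory

section Cayley

variable {G : Type*} [Group G] {S : Finset G}

theorem cayleyGraph_adj_mul_left (hS : (1 : G) ∉ S) {a : G} (ha : a ∈ S) (x : G) :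
    (cayleyGraph S).Adj x (a * x) :=
  ⟨fun h => hS (right_eq_mul.1 h ▸ ha), Or.inl (by simpa using ha)⟩

/-- The distance from the root reached by a walker on the Cayley graph with step history `l`. -/
def rootDist (S : Finset G) (l : List S) : ℕ :=
  (cayleyGraph S).dist 1 (l.map Subtype.val).prod

theorem rootDist_le_rootDist_cons_add_one (hS : (1 : G) ∉ S) (hT : (cayleyGraph S).IsTree)
    (a : S) (l : List S) : rootDist S l ≤ rootDist S (a :: l) + 1 := by
  have := hT.dist_eq_dist_add_one_of_adj 1
    (cayleyGraph_adj_mul_left hS a.2 (l.map Subtype.val).prod)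
  simp only [rootDist, List.map_cons, List.prod_cons]
  omega

theorem subsingleton_rootDist_cons_le (hS : (1 : G) ∉ S) (hT : (cayleyGraph S).IsTree)
    (l : List S) : {a : S | rootDist S (a :: l) ≤ rootDist S l}.Subsingleton := by
  intro a ha b hb
  set x := (l.map Subtype.val).prod
  have closer {c : S} (hc : rootDist S (c :: l) ≤ rootDist S l) :
      (c : G) * x ∈ {y | (cayleyGraph S).Adj x y ∧
        (cayleyGraph S).dist 1 y < (cayleyGraph S).dist 1 x} := by
    have adj := cayleyGraph_adj_mul_left hS c.2 x
    exact ⟨adj, lt_of_le_of_ne hc (hT.dist_ne_of_adj 1 adj).symm⟩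
  exact Subtype.ext (mul_right_cancel (subsingleton_adj_dist_lt hT 1 x (closer ha) (closer hb)))

end Cayley

section Drift

open StepHistory

variable {G : Type*} [Group G] [DecidableEq G] {S : Finset G} {p : ℝ}

-- Any ratio `r` with `13 / 17 < r < 1` contracts: `r + (r⁻¹ - r) * (13 / 30) < 1` there.
theorem nextMean_pow_rootDist_le_of_abs_deviation_le (hS : (1 : G) ∉ S)
    (hT : (cayleyGraph S).IsTree) (hcard : 3 ≤ Fintype.card S) (hp0 : 0 ≤ p) (hp1 : p < 1)
    {l : List S} (h : ∀ a, |deviation a l| ≤ 1 / 10) :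
    nextMean p (fun l => (4 / 5) ^ rootDist S l) l ≤ 199 / 200 * (4 / 5) ^ rootDist S l := by
  have : Nontrivial S := Fintype.one_lt_card_iff_nontrivial.1 (by omega)
  have stepProb_le (a : S) : stepProb p a l ≤ 13 / 30 :=
    (stepProb_le_of_abs_deviation_le hcard hp0 hp1 (h a)).trans_eq (by norm_num)
  have inward_le : ∑ a with rootDist S (a :: l) ≤ rootDist S l, stepProb p a l ≤ 13 / 30 := by
    refine sum_stepProb_le_of_subsingleton hp0 hp1.le ?_ stepProb_le
    simpa using subsingleton_rootDist_cons_le hS hT l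
  calc nextMean p (fun l => (4 / 5) ^ rootDist S l) l
      ≤ (4 / 5 + ((4 / 5)⁻¹ - 4 / 5) * (13 / 30)) * (4 / 5) ^ rootDist S l :=
        sum_mul_pow_le_of_sum_filter_le (stepProb_nonneg hp0 hp1.le · l) (sum_stepProb p l)
          (by norm_num) (by norm_num) (rootDist_le_rootDist_cons_add_one hS hT · l) inward_le
    _ = 199 / 200 * (4 / 5) ^ rootDist S l := by norm_num

theorem nextMean_pow_rootDist_le (hS : (1 : G) ∉ S) (hT : (cayleyGraph S).IsTree)
    (hcard : 3 ≤ Fintype.card S) (hp0 : 0 ≤ p) (hp1 : p < 1) (l : List S) :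
    nextMean p (fun l => (4 / 5) ^ rootDist S l) l ≤
      199 / 200 * (4 / 5) ^ rootDist S l + ∑ a, {l | 1 / 10 ≤ |deviation a l|}.indicator 1 l := by
  have : Nontrivial S := Fintype.one_lt_card_iff_nontrivial.1 (by omega)
  have indicator_nonneg (a : S) : 0 ≤ {l | 1 / 10 ≤ |deviation a l|}.indicator (1 : List S → ℝ) l :=
    Set.indicator_nonneg (fun _ _ => zero_le_one) l
  by_cases balanced : ∀ a, |deviation a l| ≤ 1 / 10
  · exact (nextMean_pow_rootDist_le_of_abs_deviation_le hS hT hcard hp0 hp1 balanced).trans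
      (le_add_of_nonneg_right (Finset.sum_nonneg fun a _ => indicator_nonneg a))
  · push Not at balanced
    obtain ⟨a, ha⟩ := balanced
    calc nextMean p (fun l => (4 / 5) ^ rootDist S l) l
        ≤ 1 := nextMean_le_one hp0 hp1.le fun a => pow_le_one₀ (by norm_num) (by norm_num)
      _ = {l | 1 / 10 ≤ |deviation a l|}.indicator 1 l :=
          (Set.indicator_of_mem (s := {l | 1 / 10 ≤ |deviation a l|}) ha.le 1).symm
      _ ≤ ∑ a, {l | 1 / 10 ≤ |deviation a l|}.indicator 1 l :=
          Finset.single_le_sum (f := fun a => {l | 1 / 10 ≤ |deviation a l|}.indicator 1 l)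
            (fun a _ => indicator_nonneg a) (Finset.mem_univ a)
      _ ≤ _ := le_add_of_nonneg_left (by positivity)

theorem mean_pow_rootDist_succ_le (hS : (1 : G) ∉ S) (hT : (cayleyGraph S).IsTree)
    (hcard : 3 ≤ Fintype.card S) (hp0 : 0 ≤ p) (hp1 : p < 1) {δ : ℝ} (hδ : 0 < δ)
    (hα : |memoryBias (Fintype.card S) p| ≤ 1 - 2 * δ) (n : ℕ) :
    (nextMean p ^ (n + 1)) (fun l => (4 / 5) ^ rootDist S l) [] ≤
      199 / 200 * (nextMean p ^ n) (fun l => (4 / 5) ^ rootDist S l) [] +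
        2 * Fintype.card S * Real.exp (-(δ * (1 / 10)) ^ 2 * (n : ℝ) ^ δ) := by
  have : Nontrivial S := Fintype.one_lt_card_iff_nontrivial.1 (by omega)
  calc (nextMean p ^ (n + 1)) (fun l => (4 / 5) ^ rootDist S l) []
      ≤ (nextMean p ^ n) ((199 / 200 : ℝ) • (fun l => (4 / 5) ^ rootDist S l) +
          ∑ a, {l | 1 / 10 ≤ |deviation a l|}.indicator 1) [] := by
        rw [pow_succ, Module.End.mul_apply]
        refine nextMean_pow_mono_apply hp0 hp1.le n [] fun l _ => ?_
        simpa only [Pi.add_apply, Pi.smul_apply, smul_eq_mul, Finset.sum_apply] using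
          nextMean_pow_rootDist_le hS hT hcard hp0 hp1 l
    _ = 199 / 200 * (nextMean p ^ n) (fun l => (4 / 5) ^ rootDist S l) [] +
          ∑ a, (nextMean p ^ n) ({l | 1 / 10 ≤ |deviation a l|}.indicator 1) [] := by
        rw [map_add, map_smul, map_sum, Pi.add_apply, Pi.smul_apply, smul_eq_mul,
          Finset.sum_apply]
    _ ≤ 199 / 200 * (nextMean p ^ n) (fun l => (4 / 5) ^ rootDist S l) [] +
          ∑ _a : S, 2 * Real.exp (-(δ * (1 / 10)) ^ 2 * (n : ℝ) ^ δ) := by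
        gcongr with a
        exact mean_indicator_le_abs_deviation_le hp0 hp1.le hδ hα (by norm_num) a n
    _ = _ := by
        rw [Finset.sum_const, Finset.card_univ, nsmul_eq_mul]
        ring

theorem mean_pow_rootDist_le (hS : (1 : G) ∉ S) (hT : (cayleyGraph S).IsTree)
    (hcard : 3 ≤ Fintype.card S) (hp0 : 0 ≤ p) (hp1 : p < 1) {δ : ℝ} (hδ : 0 < δ)
    (hα : |memoryBias (Fintype.card S) p| ≤ 1 - 2 * δ) (n : ℕ) :
    (nextMean p ^ n) (fun l => (4 / 5) ^ rootDist S l) [] ≤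
      800 * Fintype.card S * Real.exp (-(δ * (1 / 10)) ^ 2 * (n : ℝ) ^ δ) := by
  have hδ_half : δ ≤ 1 / 2 := by linarith [abs_nonneg (memoryBias (Fintype.card S) p)]
  have hcard' : (3 : ℝ) ≤ Fintype.card S := by exact_mod_cast hcard
  have exp_le : Real.exp ((δ * (1 / 10)) ^ 2) ≤ 400 / 399 :=
    calc Real.exp ((δ * (1 / 10)) ^ 2) ≤ Real.exp (1 / 400) := by
          gcongr
          nlinarith
      _ ≤ 1 / (1 - 1 / 400) := Real.exp_bound_div_one_sub_of_interval (by norm_num) (by norm_num)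
      _ = 400 / 399 := by norm_num
  refine le_mul_of_succ_le_mul_add
    (u := fun n => (nextMean p ^ n) (fun l => (4 / 5) ^ rootDist S l) [])
    (φ := fun n : ℕ => Real.exp (-(δ * (1 / 10)) ^ 2 * (n : ℝ) ^ δ))
    (ρ := 199 / 200) (B := 2 * Fintype.card S) (by norm_num) (fun n => (Real.exp_pos _).le)
    (mean_pow_rootDist_succ_le hS hT hcard hp0 hp1 hδ hα)
    (exp_neg_mul_rpow_le_succ (by positivity) hδ.le (by linarith)) ?_ (by positivity) ?_ n
  · have : (1 : ℝ) ≤ 800 * Fintype.card S := by linarith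
    simpa [rootDist, Real.zero_rpow hδ.ne'] using this
  · calc Real.exp ((δ * (1 / 10)) ^ 2) *
          (199 / 200 * (800 * Fintype.card S) + 2 * Fintype.card S)
        ≤ 400 / 399 * (199 / 200 * (800 * Fintype.card S) + 2 * Fintype.card S) := by gcongr
      _ = 800 * Fintype.card S := by ring

end Drift

namespace ERW

open StepHistory

variable {G : Type*} [Group G] [DecidableEq G] {d : ℕ} {p : ℝ}
  {Ω : Type*} [MeasurableSpace Ω] {P : Measure Ω}

/-- The first `n` steps of the walk, as a list of generators with the most recent step first. -/
def history (E : ERW G d p Ω P) : ℕ → Ω → List E.S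
  | 0 => fun _ => []
  | n + 1 => fun ω => ⟨E.g (n + 1) ω, E.mem_S (n + 1) n.succ_pos ω⟩ :: E.history n ω

theorem length_history (E : ERW G d p Ω P) (n : ℕ) (ω : Ω) : (E.history n ω).length = n := by
  induction n with
  | zero => rfl
  | succ n ih => rw [history, List.length_cons, ih]

theorem dist_eq_rootDist_history (E : ERW G d p Ω P) (n : ℕ) (ω : Ω) :
    E.dist n ω = rootDist E.S (E.history n ω) := by
  suffices E.pos n ω = ((E.history n ω).map Subtype.val).prod by rw [dist, rootDist, this]
  induction n with
  | zero => rfl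
  | succ n ih => simp only [pos, history, List.map_cons, List.prod_cons, ih]

theorem history_eq_iff (E : ERW G d p Ω P) (n : ℕ) (ω ω' : Ω) :
    E.history n ω = E.history n ω' ↔ ∀ k ∈ Finset.Icc 1 n, E.g k ω = E.g k ω' := by
  induction n with
  | zero => simp [history]
  | succ n ih =>
    rw [← Finset.insert_Icc_right_eq_Icc_add_one (by omega), Finset.forall_mem_insert]
    simp only [history, List.cons.injEq, Subtype.mk.injEq, ih]

theorem card_filter_eq_count_history (E : ERW G d p Ω P) (n : ℕ) (ω : Ω) (a : E.S) :
    ((Finset.Icc 1 n).filter fun k => E.g k ω = a).card = (E.history n ω).count a := by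
  induction n with
  | zero => rfl
  | succ n ih =>
    rw [← Finset.insert_Icc_right_eq_Icc_add_one (by omega), Finset.filter_insert, history,
      List.count_cons, ← ih]
    simp only [beq_iff_eq, Subtype.ext_iff]
    split_ifs
    · rw [Finset.card_insert_of_notMem (by simp)]
    · rfl

theorem setOf_history_succ_eq_cons (E : ERW G d p Ω P) (n : ℕ) (a : E.S) (l : List E.S) :
    {ω | E.history (n + 1) ω = a :: l} = {ω | E.history n ω = l} ∩ {ω | E.g (n + 1) ω = a} := by
  ext ω
  simp [history, Subtype.ext_iff, and_comm]

theorem measureReal_history_cons [IsProbabilityMeasure P] (E : ERW G d p Ω P) [Nontrivial E.S]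
    (n : ℕ) (a : E.S) (l : List E.S) :
    P.real {ω | E.history (n + 1) ω = a :: l} =
      P.real {ω | E.history n ω = l} * stepProb p a l := by
  rw [setOf_history_succ_eq_cons]
  rcases Set.eq_empty_or_nonempty {ω | E.history n ω = l} with hempty | ⟨ω₀, rfl⟩
  · simp [hempty]
  rcases Nat.eq_zero_or_pos n with rfl | hn
  · simpa [history, stepProb, deviation, E.card_S, Measure.real] using E.init a a.2
  · have history_ne_nil : E.history n ω₀ ≠ [] :=
      List.ne_nil_of_length_pos (by rwa [length_history])
    have update := E.update n hn (fun k => E.g k ω₀) a a.2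
    simp only [card_filter_eq_count_history, ← history_eq_iff] at update
    rw [stepProb_eq_of_ne_nil p a history_ne_nil, length_history, Fintype.card_coe, E.card_S,
      mul_comm]
    -- `List.count` takes its `BEq` instance from `E.S` here and from `DecidableEq` in `stepProb`.
    simpa only [List.count_eq_countP, beq_eq_decide, Measure.real] using update

theorem measureReal_history_mem_le_of_history_eq [IsProbabilityMeasure P] (E : ERW G d p Ω P)
    [Nontrivial E.S] (B : Set (List E.S)) (n m : ℕ) (l : List E.S) :
    P.real {ω | E.history m ω = l ∧ E.history (m + n) ω ∈ B} ≤
      P.real {ω | E.history m ω = l} * (nextMean p ^ n) (B.indicator 1) l := by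
  induction n generalizing m l with
  | zero =>
    by_cases hl : l ∈ B
    · simp only [hl, pow_zero, Module.End.one_apply, Set.indicator_of_mem, Pi.one_apply, mul_one]
      exact measureReal_mono Set.inter_subset_left
    · have : {ω | E.history m ω = l ∧ E.history m ω ∈ B} = ∅ :=
        Set.eq_empty_of_forall_notMem fun ω ⟨h, hB⟩ => hl (h ▸ hB)
      simp [hl, this]
  | succ n ih =>
    calc P.real {ω | E.history m ω = l ∧ E.history (m + (n + 1)) ω ∈ B}
        ≤ P.real (⋃ a, {ω | E.history (m + 1) ω = a :: l ∧ E.history (m + 1 + n) ω ∈ B}) := by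
          refine measureReal_mono ?_
          rintro ω ⟨rfl, hB⟩
          exact Set.mem_iUnion.2 ⟨_, rfl, by rwa [add_assoc, add_comm 1 n]⟩
      _ ≤ ∑ a, P.real {ω | E.history (m + 1) ω = a :: l ∧ E.history (m + 1 + n) ω ∈ B} :=
          measureReal_iUnion_fintype_le _
      _ ≤ ∑ a, P.real {ω | E.history m ω = l} * stepProb p a l *
            (nextMean p ^ n) (B.indicator 1) (a :: l) := by
          gcongr with a
          rw [← measureReal_history_cons]
          exact ih (m + 1) (a :: l)
      _ = P.real {ω | E.history m ω = l} * (nextMean p ^ (n + 1)) (B.indicator 1) l := by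
          rw [pow_succ', Module.End.mul_apply, nextMean_apply, Finset.mul_sum]
          simp only [mul_assoc]

theorem measureReal_history_mem_le [IsProbabilityMeasure P] (E : ERW G d p Ω P) [Nontrivial E.S]
    (B : Set (List E.S)) (n : ℕ) :
    P.real {ω | E.history n ω ∈ B} ≤ (nextMean p ^ n) (B.indicator 1) [] := by
  simpa [history] using E.measureReal_history_mem_le_of_history_eq B n 0 []

theorem measureReal_dist_eq_zero_le [IsProbabilityMeasure P] (E : ERW G d p Ω P) (hd : 3 ≤ d)
    (hp0 : 0 ≤ p) (hp1 : p < 1) {δ : ℝ} (hδ : 0 < δ) (hα : |memoryBias d p| ≤ 1 - 2 * δ) (n : ℕ) :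
    P.real {ω | E.dist n ω = 0} ≤ 800 * d * Real.exp (-(δ * (1 / 10)) ^ 2 * (n : ℝ) ^ δ) := by
  have card_steps : Fintype.card E.S = d := by rw [Fintype.card_coe, E.card_S]
  have : Nontrivial E.S := Fintype.one_lt_card_iff_nontrivial.1 (by omega)
  calc P.real {ω | E.dist n ω = 0}
      = P.real {ω | E.history n ω ∈ {l | rootDist E.S l = 0}} := by
        simp only [dist_eq_rootDist_history, Set.mem_ofPred_eq]
    _ ≤ (nextMean p ^ n) ({l | rootDist E.S l = 0}.indicator 1) [] :=
        E.measureReal_history_mem_le _ n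
    _ ≤ (nextMean p ^ n) (fun l => (4 / 5) ^ rootDist E.S l) [] := by
        refine nextMean_pow_mono_apply hp0 hp1.le n [] fun l _ =>
          Set.indicator_apply_le' (fun h => ?_) fun _ => by positivity
        rw [Set.mem_ofPred.1 h, pow_zero, Pi.one_apply]
    _ ≤ 800 * d * Real.exp (-(δ * (1 / 10)) ^ 2 * (n : ℝ) ^ δ) := by
        simpa only [card_steps] using mean_pow_rootDist_le E.one_not_mem E.tree
          (by rwa [card_steps]) hp0 hp1 hδ (by rwa [card_steps]) n

end ERW

theorem erw_return_prob_linear_general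
    {G : Type*} [Group G] [DecidableEq G] {Ω : Type*} [MeasurableSpace Ω]
    {P : Measure Ω} [IsProbabilityMeasure P]
    (d : ℕ) (hd : 3 ≤ d) (p : ℝ) (hp0 : 0 ≤ p) (hp1 : p < 1) (E : ERW G d p Ω P) :
    ∃ δ : ℝ, 0 < δ ∧ ∃ c : ℝ, 0 < c ∧ ∃ C : ℝ, 0 < C ∧ ∀ n : ℕ,
      (P {ω | E.dist n ω = 0}).toReal ≤ C * Real.exp (-c * (n : ℝ) ^ δ) := by
  set δ := (1 - |memoryBias d p|) / 2 with hδ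
  have hδ0 : 0 < δ := by linarith [abs_memoryBias_lt_one hd hp0 hp1]
  have : 0 < d := by omega
  exact ⟨δ, hδ0, (δ * (1 / 10)) ^ 2, by positivity, 800 * d, by positivity,
    E.measureReal_dist_eq_zero_le hd hp0 hp1 hδ0 (by linarith)⟩

/-- return probability, `p ∈ [1/2, 1)` or `(p, d) = (0, 3)`:
there is `C > 0` with `P(Δ n = 0) ≤ C / n` for all `n ≥ 1`. -/
theorem erw_return_prob_linear
    {G : Type*} [Group G] [DecidableEq G] {Ω : Type*} [MeasurableSpace Ω]
    {P : Measure Ω} [IsProbabilityMeasure P]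
    (d : ℕ) (hd : 3 ≤ d) (p : ℝ) (hp0 : 0 ≤ p) (hp1 : p < 1)
    (hcase : 1 / 2 ≤ p ∨ (p = 0 ∧ d = 3))
    (E : ERW G d p Ω P) :
    ∃ C : ℝ, 0 < C ∧ ∀ n : ℕ, 1 ≤ n →
      (P {ω | E.dist n ω = 0}).toReal ≤ C / n := by
  obtain ⟨δ, hδ, c, hc, C, hC, bound⟩ := erw_return_prob_linear_general d hd p hp0 hp1 E
  exact exists_le_div_of_le_exp_neg_mul_rpow hc hδ hC bound

end
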